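/- Let (Γ,+,d) be a metric Abelian monoid with homogeneous pseudometric d, and let φ be an admissible function with φ > 0. Assume the uniformly bounded defect property: there exists C > 0 such that for every quasi-linear sequence γ̄ with defect bounded by C'·φ for some C' ≥ 0, there exists a quasi-linear sequence γ̄' with defect bounded by C·φ and dista(γ̄,γ̄') = 0. Then the space Qlin_φ(Γ,d) of all quasi-linear sequences with defect bounded by some multiple of φ, equipped with the asymptotic distance dista, is a complete pseudometric space: every sequence (γ̄ᵢ) in Qlin_φ(Γ,d) that is Cauchy with respect to dista admits η̄ ∈ Qlin_φ(Γ,d) with dista(γ̄ᵢ, η̄) → 0 as i → ∞. -/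

import Mathlib

/-!
A sequence with admissible defect `φ` is linear up to an error of order `φ`: halving `m` repeatedly
gives `d (γ (m n)) (m • γ n) ≤ m (D / 2) φ(n)`, because the errors `φ(2ʲ n)` weighted by `2⁻ʲ` sum
to at most `2 n ∫ₙ^∞ φ(t) / t² dt ≤ (D / 4) φ(n)`. Homogeneity lets one divide by `m` and let
`m → ∞`, so that the asymptotic distance controls every single term:
`d (γ₁ n) (γ₂ n) ≤ O(φ(n)) + n dista γ₁ γ₂`.

Replace the members of a Cauchy sequence by asymptotically equivalent ones with the common defect
`C φ`, and pass to a subsequence `g` with `dista (g m) (g n) ≤ φ(1) / (m + 1)` for `m ≤ n`. Then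
`d (g m m) (g n m) = O(φ(m))` uniformly in `n ≥ m`, which is exactly what the diagonal `n ↦ g n n`
needs in order to be quasi-linear with defect `O(φ)`. Since `φ(n) / n → 0`, it is the limit.
-/

open MeasureTheory Filter

/-- A pseudometric on `Γ`: reflexive-zero, symmetric, triangle inequality. -/
def IsPseudoMetric {Γ : Type*} (d : Γ → Γ → ℝ) : Prop :=
  (∀ x, d x x = 0) ∧ (∀ x y, d x y = d y x) ∧ (∀ x y z, d x z ≤ d x y + d y z)

/-- A metric Abelian monoid: an additive commutative monoid with a pseudometric
for which addition is 1-Lipschitz in each argument. -/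
def IsMetricAbelianMonoid {Γ : Type*} [AddCommMonoid Γ] (d : Γ → Γ → ℝ) : Prop :=
  IsPseudoMetric d ∧ ∀ a b c : Γ, d (a + b) (a + c) ≤ d b c

/-- `φ : [1,∞) → [0,∞)` is admissible with constant `D ≥ 0`: non-decreasing,
summable against `dt/t²`, and `s·∫_s^∞ φ(t)/t² dt ≤ (D/8)·φ(s)` for all `s ≥ 1`. -/
def AdmissibleWith (φ : ℝ → ℝ) (D : ℝ) : Prop :=
  (∀ t, 1 ≤ t → 0 ≤ φ t) ∧ MonotoneOn φ (Set.Ici 1) ∧ 0 ≤ D ∧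
  (∀ s, 1 ≤ s → IntegrableOn (fun t => φ t / t ^ 2) (Set.Ioi s)) ∧
  (∀ s, 1 ≤ s → s * ∫ t in Set.Ioi s, φ t / t ^ 2 ≤ D / 8 * φ s)

def Admissible (φ : ℝ → ℝ) : Prop := ∃ D, AdmissibleWith φ D

/-- A sequence `γ : ℕ → Γ` is quasi-linear with defect bounded by `φ`
(with respect to the pseudometric `d`). -/
def QuasiLinear {Γ : Type*} [AddCommMonoid Γ] (d : Γ → Γ → ℝ) (φ : ℝ → ℝ)
    (γ : ℕ → Γ) : Prop :=
  γ 0 = 0 ∧ ∀ m n : ℕ, 1 ≤ m → 1 ≤ n →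
    d (γ (m + n)) (γ m + γ n) ≤ φ ((m + n : ℕ) : ℝ)

/-- The asymptotic distance `lim_{n→∞} d(γ₁(n),γ₂(n))/n`, realized as a `limsup`
(for quasi-linear sequences the limit exists, so this is that limit). -/
noncomputable def dista {Γ : Type*} (d : Γ → Γ → ℝ) (γ₁ γ₂ : ℕ → Γ) : ℝ :=
  Filter.limsup (fun n : ℕ => d (γ₁ n) (γ₂ n) / n) Filter.atTop

/-- The space `Qlin_φ(Γ, d)` of sequences that are quasi-linear with defect bounded by some
nonnegative multiple of `φ`. -/
def Qlin {Γ : Type*} [AddCommMonoid Γ] (d : Γ → Γ → ℝ) (φ : ℝ → ℝ) : Set (ℕ → Γ) :=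
  {γ | ∃ c ≥ (0 : ℝ), QuasiLinear d (fun t => c * φ t) γ}

section MonotoneIntegrals

variable {φ : ℝ → ℝ} {a b : ℝ}

theorem intervalIntegrable_div_sq_of_monotoneOn (ha : 0 < a) (hab : a ≤ b)
    (hφ : MonotoneOn φ (Set.Icc a b)) :
    IntervalIntegrable (fun t => φ t / t ^ 2) volume a b := by
  rw [← Set.uIcc_of_le hab] at hφ
  have hcont : ContinuousOn (fun t : ℝ => (t ^ 2)⁻¹) (Set.uIcc a b) := by
    refine ContinuousOn.inv₀ (by fun_prop) fun t ht => ?_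
    rw [Set.uIcc_of_le hab] at ht
    exact pow_ne_zero 2 (ha.trans_le ht.1).ne'
  simpa only [div_eq_mul_inv] using hφ.intervalIntegrable.mul_continuousOn hcont

theorem mul_inv_sub_inv_le_integral_div_sq (ha : 0 < a) (hab : a ≤ b)
    (hφ : MonotoneOn φ (Set.Icc a b)) :
    φ a * (a⁻¹ - b⁻¹) ≤ ∫ t in a..b, φ t / t ^ 2 := by
  have hzero : (0 : ℝ) ∉ Set.uIcc a b := by
    rw [Set.uIcc_of_le hab]
    exact fun h => ha.not_ge h.1
  have hint : ∫ t in a..b, φ a / t ^ 2 = φ a * (a⁻¹ - b⁻¹) := by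
    have hzpow := integral_zpow (n := -2) (.inr ⟨by norm_num, hzero⟩)
    have hexp : (-2 + 1 : ℤ) = -1 := rfl
    simp only [zpow_neg, hexp, zpow_ofNat] at hzpow
    simp only [div_eq_mul_inv, intervalIntegral.integral_const_mul, hzpow]
    push_cast
    ring
  rw [← hint]
  refine intervalIntegral.integral_mono_on hab
    (intervalIntegrable_div_sq_of_monotoneOn ha hab monotoneOn_const)
    (intervalIntegrable_div_sq_of_monotoneOn ha hab hφ) fun t ht => ?_
  have := hφ (Set.left_mem_Icc.2 hab) ht ht.1
  gcongr

theorem div_le_two_mul_integral_div_sq (ha : 0 < a) (hφ : MonotoneOn φ (Set.Icc a (2 * a))) :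
    φ a / a ≤ 2 * ∫ t in a..2 * a, φ t / t ^ 2 := by
  have := mul_inv_sub_inv_le_integral_div_sq ha (by linarith) hφ
  calc φ a / a = 2 * (φ a * (a⁻¹ - (2 * a)⁻¹)) := by field_simp; ring
    _ ≤ 2 * ∫ t in a..2 * a, φ t / t ^ 2 := by gcongr

theorem sum_dyadic_le_integral_div_sq (ha : 0 < a) (hφ : MonotoneOn φ (Set.Ici a)) (k : ℕ) :
    ∑ j ∈ Finset.range k, φ (2 ^ j * a) / 2 ^ j ≤
      2 * a * ∫ t in a..2 ^ k * a, φ t / t ^ 2 := by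
  have hmono (j : ℕ) : MonotoneOn φ (Set.Icc (2 ^ j * a) (2 * (2 ^ j * a))) :=
    hφ.mono fun t ht => (le_mul_of_one_le_left ha.le (one_le_pow₀ one_le_two)).trans ht.1
  have hsucc (j : ℕ) : 2 ^ (j + 1) * a = 2 * (2 ^ j * a) := by ring
  have hadj := intervalIntegral.sum_integral_adjacent_intervals (f := fun t => φ t / t ^ 2)
    (μ := volume) (a := fun j : ℕ => 2 ^ j * a) (n := k) fun j _ => by
      rw [hsucc]
      exact intervalIntegrable_div_sq_of_monotoneOn (by positivity)
        (le_mul_of_one_le_left (by positivity) one_le_two) (hmono j)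
  rw [pow_zero, one_mul] at hadj
  rw [← hadj, Finset.mul_sum]
  refine Finset.sum_le_sum fun j _ => ?_
  calc φ (2 ^ j * a) / 2 ^ j = a * (φ (2 ^ j * a) / (2 ^ j * a)) := by field_simp
    _ ≤ a * (2 * ∫ t in 2 ^ j * a..2 * (2 ^ j * a), φ t / t ^ 2) := by
      gcongr
      exact div_le_two_mul_integral_div_sq (by positivity) (hmono j)
    _ = 2 * a * ∫ t in 2 ^ j * a..2 ^ (j + 1) * a, φ t / t ^ 2 := by rw [hsucc]; ring

end MonotoneIntegrals

namespace AdmissibleWith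

variable {φ : ℝ → ℝ} {D : ℝ}

theorem const_mul (hφ : AdmissibleWith φ D) {c : ℝ} (hc : 0 ≤ c) :
    AdmissibleWith (fun t => c * φ t) D := by
  obtain ⟨hnonneg, hmono, hD, hint, hle⟩ := hφ
  refine ⟨fun t ht => mul_nonneg hc (hnonneg t ht),
    (monotone_mul_left_of_nonneg hc).comp_monotoneOn hmono, hD, fun s hs => ?_, fun s hs => ?_⟩
  · simpa only [IntegrableOn, mul_div_assoc] using (hint s hs).const_mul c
  · simp only [mul_div_assoc, integral_const_mul]
    linarith [mul_le_mul_of_nonneg_left (hle s hs) hc]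

theorem sum_dyadic_le (hφ : AdmissibleWith φ D) {s : ℝ} (hs : 1 ≤ s) (k : ℕ) :
    ∑ j ∈ Finset.range k, φ (2 ^ j * s) / 2 ^ j ≤ D / 4 * φ s := by
  obtain ⟨hnonneg, hmono, -, hint, hle⟩ := hφ
  have hs0 : 0 < s := one_pos.trans_le hs
  have htail : ∫ t in s..2 ^ k * s, φ t / t ^ 2 ≤ ∫ t in Set.Ioi s, φ t / t ^ 2 := by
    rw [intervalIntegral.integral_of_le
      (le_mul_of_one_le_left hs0.le (one_le_pow₀ one_le_two))]
    refine setIntegral_mono_set (hint s hs) ?_ Set.Ioc_subset_Ioi_self.eventuallyLE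
    exact ae_restrict_of_forall_mem measurableSet_Ioi fun t ht =>
      div_nonneg (hnonneg t (hs.trans ht.le)) (sq_nonneg t)
  calc ∑ j ∈ Finset.range k, φ (2 ^ j * s) / 2 ^ j
      ≤ 2 * s * ∫ t in s..2 ^ k * s, φ t / t ^ 2 :=
        sum_dyadic_le_integral_div_sq hs0 (hmono.mono (Set.Ici_subset_Ici.2 hs)) k
    _ ≤ 2 * s * ∫ t in Set.Ioi s, φ t / t ^ 2 := by gcongr
    _ ≤ 2 * (D / 8 * φ s) := by
        rw [mul_assoc]
        exact mul_le_mul_of_nonneg_left (hle s hs) two_pos.le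
    _ = D / 4 * φ s := by ring

theorem tendsto_div_natCast (hφ : AdmissibleWith φ D) :
    Tendsto (fun n : ℕ => φ n / n) atTop (nhds 0) := by
  obtain ⟨hnonneg, hmono, -, hint, -⟩ := hφ
  have hprim : Tendsto (fun x => ∫ t in (1 : ℝ)..x, φ t / t ^ 2) atTop
      (nhds (∫ t in Set.Ioi 1, φ t / t ^ 2)) :=
    intervalIntegral_tendsto_integral_Ioi 1 (hint 1 le_rfl) tendsto_id
  have hdiff := ((hprim.comp (tendsto_id.const_mul_atTop two_pos)).sub hprim).const_mul 2
  rw [sub_self, mul_zero] at hdiff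
  have hcast := tendsto_natCast_atTop_atTop (R := ℝ)
  have hge : ∀ᶠ n : ℕ in atTop, (1 : ℝ) ≤ n := hcast.eventually_ge_atTop 1
  refine squeeze_zero' ?_ ?_ (hdiff.comp hcast)
  · filter_upwards [hge] with n hn using div_nonneg (hnonneg n hn) n.cast_nonneg
  · filter_upwards [hge] with n hn
    have hintegrable {b : ℝ} (hb : 1 ≤ b) :
        IntervalIntegrable (fun t => φ t / t ^ 2) volume 1 b :=
      intervalIntegrable_div_sq_of_monotoneOn one_pos hb (hmono.mono Set.Icc_subset_Ici_self)
    simp only [Function.comp_apply, id_eq]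
    rw [intervalIntegral.integral_interval_sub_left (hintegrable (by linarith)) (hintegrable hn)]
    exact div_le_two_mul_integral_div_sq (one_pos.trans_le hn)
      (hmono.mono fun t ht => hn.trans ht.1)

end AdmissibleWith

section Distance

variable {Γ : Type*} {d : Γ → Γ → ℝ}

theorem IsPseudoMetric.nonneg (h : IsPseudoMetric d) (x y : Γ) : 0 ≤ d x y := by
  obtain ⟨d_self, d_comm, d_triangle⟩ := h
  linarith [d_triangle x y x, d_self x, d_comm x y]

variable [AddCommMonoid Γ]

theorem IsMetricAbelianMonoid.dist_add_add_le (h : IsMetricAbelianMonoid d) (a b x y : Γ) :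
    d (a + b) (x + y) ≤ d a x + d b y := by
  obtain ⟨⟨-, -, d_triangle⟩, d_add_left⟩ := h
  calc d (a + b) (x + y) ≤ d (a + b) (a + y) + d (y + a) (y + x) := by
        rw [add_comm y a, add_comm y x]
        exact d_triangle _ _ _
    _ ≤ d a x + d b y := by linarith [d_add_left a b y, d_add_left y a x]

theorem IsMetricAbelianMonoid.dist_nsmul_nsmul_le (h : IsMetricAbelianMonoid d) (n : ℕ) (x y : Γ) :
    d (n • x) (n • y) ≤ n * d x y := by
  induction n with
  | zero => simp [h.1.1]
  | succ n ih =>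
    rw [succ_nsmul, succ_nsmul]
    push_cast
    linarith [h.dist_add_add_le (n • x) x (n • y) y]

end Distance

section AsymptoticDistance

variable {Γ : Type*} {d : Γ → Γ → ℝ} {γ₁ γ₂ γ₃ : ℕ → Γ}

theorem dista_nonneg (h : IsPseudoMetric d) (γ₁ γ₂ : ℕ → Γ) : 0 ≤ dista d γ₁ γ₂ := by
  rw [dista, limsup_eq]
  refine Real.sInf_nonneg fun a ha => ?_
  obtain ⟨n, hn⟩ := Eventually.exists ha
  exact (div_nonneg (h.nonneg _ _) n.cast_nonneg).trans hn

theorem dista_comm (h : IsPseudoMetric d) (γ₁ γ₂ : ℕ → Γ) : dista d γ₁ γ₂ = dista d γ₂ γ₁ := by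
  simp only [dista, h.2.1 (γ₁ _)]

theorem isBoundedUnder_ge_dist_div (h : IsPseudoMetric d) (γ₁ γ₂ : ℕ → Γ) :
    IsBoundedUnder (· ≥ ·) atTop fun n : ℕ => d (γ₁ n) (γ₂ n) / n :=
  isBoundedUnder_of ⟨0, fun n => div_nonneg (h.nonneg _ _) n.cast_nonneg⟩

theorem dista_triangle_of_isBoundedUnder (h : IsPseudoMetric d)
    (h₁₂ : IsBoundedUnder (· ≤ ·) atTop fun n : ℕ => d (γ₁ n) (γ₂ n) / n)
    (h₂₃ : IsBoundedUnder (· ≤ ·) atTop fun n : ℕ => d (γ₂ n) (γ₃ n) / n) :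
    dista d γ₁ γ₃ ≤ dista d γ₁ γ₂ + dista d γ₂ γ₃ := by
  have hge₁₂ := isBoundedUnder_ge_dist_div h γ₁ γ₂
  have hge₂₃ := (isBoundedUnder_ge_dist_div h γ₂ γ₃).isCoboundedUnder_le
  refine le_trans ?_ (limsup_add_le hge₁₂ h₁₂ hge₂₃ h₂₃)
  refine limsup_le_limsup (.of_forall fun n => ?_)
    (isBoundedUnder_ge_dist_div h γ₁ γ₃).isCoboundedUnder_le (isBoundedUnder_le_add h₁₂ h₂₃)
  rw [Pi.add_apply, ← add_div]
  exact div_le_div_of_nonneg_right (h.2.2 _ _ _) n.cast_nonneg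

theorem dista_le_of_eventually_le (h : IsPseudoMetric d) {ψ : ℕ → ℝ} {ε : ℝ}
    (hψ : Tendsto (fun n : ℕ => ψ n / n) atTop (nhds 0))
    (hd : ∀ᶠ n : ℕ in atTop, d (γ₁ n) (γ₂ n) ≤ ψ n + n * ε) : dista d γ₁ γ₂ ≤ ε := by
  have hlim : Tendsto (fun n : ℕ => ψ n / n + ε) atTop (nhds ε) := by
    simpa only [zero_add] using hψ.add_const ε
  rw [← hlim.limsup_eq]
  refine limsup_le_limsup ?_ (isBoundedUnder_ge_dist_div h γ₁ γ₂).isCoboundedUnder_le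
    hlim.isBoundedUnder_le
  filter_upwards [hd, eventually_gt_atTop 0] with n hn hpos
  calc d (γ₁ n) (γ₂ n) / n ≤ (ψ n + n * ε) / n := by gcongr
    _ = ψ n / n + ε := by field_simp

end AsymptoticDistance

namespace QuasiLinear

variable {Γ : Type*} [AddCommMonoid Γ] {d : Γ → Γ → ℝ} {φ φ₁ φ₂ : ℝ → ℝ} {D D₁ D₂ : ℝ}
  {γ γ₁ γ₂ : ℕ → Γ}

theorem dist_add_nsmul_le (h : IsMetricAbelianMonoid d) (hγ : QuasiLinear d φ γ) {a b n : ℕ}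
    (ha : 1 ≤ a) (hb : 1 ≤ b) (hn : 1 ≤ n) (x : Γ) :
    d (γ ((a + b) * n)) ((a + b) • x) ≤
      φ ((a + b) * n : ℕ) + (d (γ (a * n)) (a • x) + d (γ (b * n)) (b • x)) := by
  rw [add_mul, add_nsmul]
  calc d (γ (a * n + b * n)) (a • x + b • x)
      ≤ d (γ (a * n + b * n)) (γ (a * n) + γ (b * n)) +
          d (γ (a * n) + γ (b * n)) (a • x + b • x) := h.1.2.2 _ _ _
    _ ≤ φ (a * n + b * n : ℕ) + (d (γ (a * n)) (a • x) + d (γ (b * n)) (b • x)) :=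
        add_le_add (hγ.2 _ _ (Nat.mul_pos ha hn) (Nat.mul_pos hb hn)) (h.dist_add_add_le _ _ _ _)

theorem dist_nsmul_le_sum (h : IsMetricAbelianMonoid d) (hnonneg : ∀ t, 1 ≤ t → 0 ≤ φ t)
    (hmono : MonotoneOn φ (Set.Ici 1)) (hγ : QuasiLinear d φ γ) {n : ℕ} (hn : 1 ≤ n)
    {k m : ℕ} (hm : 1 ≤ m) (hmk : m ≤ 2 ^ k) :
    d (γ (m * n)) (m • γ n) ≤ 2 ^ k * ∑ j ∈ Finset.range (k + 1), φ (2 ^ j * n) / 2 ^ j := by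
  have hn' : (1 : ℝ) ≤ n := Nat.one_le_cast.2 hn
  have hone (k : ℕ) : d (γ (1 * n)) (1 • γ n) ≤
      2 ^ k * ∑ j ∈ Finset.range (k + 1), φ (2 ^ j * n) / 2 ^ j := by
    rw [one_mul, one_nsmul, h.1.1]
    refine mul_nonneg (by positivity) (Finset.sum_nonneg fun j _ => ?_)
    have := hnonneg _ (one_le_mul_of_one_le_of_one_le (one_le_pow₀ (n := j) one_le_two) hn')
    positivity
  induction k generalizing m with
  | zero =>
    obtain rfl : m = 1 := le_antisymm hmk hm
    exact hone 0
  | succ k ih =>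
    obtain rfl | hm2 := hm.eq_or_lt
    · exact hone (k + 1)
    obtain ⟨a, b, rfl, ha, hb, hak, hbk⟩ :
        ∃ a b, m = a + b ∧ 1 ≤ a ∧ 1 ≤ b ∧ a ≤ 2 ^ k ∧ b ≤ 2 ^ k :=
      ⟨m / 2, m - m / 2, by omega, by omega, by omega, by omega, by omega⟩
    have hφ_le : φ ((a + b) * n : ℕ) ≤ φ (2 ^ (k + 1) * n) := by
      have hle : (((a + b) * n : ℕ) : ℝ) ≤ 2 ^ (k + 1) * n := by
        exact_mod_cast Nat.mul_le_mul_right n hmk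
      have hge : (1 : ℝ) ≤ ((a + b) * n : ℕ) := Nat.one_le_cast.2 (Nat.mul_pos hm hn)
      exact hmono hge (hge.trans hle) hle
    have hsum_succ : 2 ^ (k + 1) * ∑ j ∈ Finset.range (k + 1 + 1), φ (2 ^ j * n) / 2 ^ j =
        2 * (2 ^ k * ∑ j ∈ Finset.range (k + 1), φ (2 ^ j * n) / 2 ^ j) + φ (2 ^ (k + 1) * n) := by
      rw [Finset.sum_range_succ, mul_add, mul_div_cancel₀ _ (by positivity)]
      ring
    rw [hsum_succ]
    linarith [hγ.dist_add_nsmul_le h ha hb hn (γ n), ih ha hak, ih hb hbk]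

theorem dist_nsmul_le (h : IsMetricAbelianMonoid d) (hφ : AdmissibleWith φ D)
    (hγ : QuasiLinear d φ γ) (m : ℕ) {n : ℕ} (hn : 1 ≤ n) :
    d (γ (m * n)) (m • γ n) ≤ m * (D / 2 * φ n) := by
  have hn' : (1 : ℝ) ≤ n := Nat.one_le_cast.2 hn
  obtain rfl | hm := Nat.eq_zero_or_pos m
  · simp [hγ.1, h.1.1]
  have hlog : (2 : ℝ) ^ Nat.log 2 m ≤ m := by exact_mod_cast Nat.pow_log_le_self 2 hm.ne'
  have hbound : 0 ≤ D / 2 * φ n := mul_nonneg (div_nonneg hφ.2.2.1 two_pos.le) (hφ.1 n hn')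
  calc d (γ (m * n)) (m • γ n)
      ≤ 2 ^ (Nat.log 2 m + 1) *
          ∑ j ∈ Finset.range (Nat.log 2 m + 1 + 1), φ (2 ^ j * n) / 2 ^ j :=
        hγ.dist_nsmul_le_sum h hφ.1 hφ.2.1 hn hm (Nat.lt_pow_succ_log_self one_lt_two m).le
    _ ≤ 2 ^ (Nat.log 2 m + 1) * (D / 4 * φ n) := by gcongr; exact hφ.sum_dyadic_le hn' _
    _ = 2 ^ Nat.log 2 m * (D / 2 * φ n) := by ring
    _ ≤ m * (D / 2 * φ n) := by gcongr

theorem isBoundedUnder_dist_div (h : IsMetricAbelianMonoid d) (hφ₁ : AdmissibleWith φ₁ D₁)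
    (hφ₂ : AdmissibleWith φ₂ D₂) (hγ₁ : QuasiLinear d φ₁ γ₁) (hγ₂ : QuasiLinear d φ₂ γ₂) :
    IsBoundedUnder (· ≤ ·) atTop fun n : ℕ => d (γ₁ n) (γ₂ n) / n := by
  obtain ⟨-, d_comm, d_triangle⟩ := h.1
  refine isBoundedUnder_of_eventually_le
    (a := D₁ / 2 * φ₁ 1 + d (γ₁ 1) (γ₂ 1) + D₂ / 2 * φ₂ 1) ?_
  filter_upwards [eventually_gt_atTop 0] with n hn
  have hlin₁ := hγ₁.dist_nsmul_le h hφ₁ n le_rfl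
  have hlin₂ := hγ₂.dist_nsmul_le h hφ₂ n le_rfl
  rw [mul_one, Nat.cast_one] at hlin₁ hlin₂
  rw [div_le_iff₀' (by positivity)]
  linarith [d_triangle (γ₁ n) (n • γ₁ 1) (γ₂ n), d_triangle (n • γ₁ 1) (n • γ₂ 1) (γ₂ n),
    d_comm (n • γ₂ 1) (γ₂ n), h.dist_nsmul_nsmul_le n (γ₁ 1) (γ₂ 1)]

theorem dist_le_add_mul_dista (h : IsMetricAbelianMonoid d)
    (hhom : ∀ (n : ℕ) (x y : Γ), d (n • x) (n • y) = (n : ℝ) * d x y)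
    (hφ₁ : AdmissibleWith φ₁ D₁) (hφ₂ : AdmissibleWith φ₂ D₂)
    (hγ₁ : QuasiLinear d φ₁ γ₁) (hγ₂ : QuasiLinear d φ₂ γ₂) {n : ℕ} (hn : 1 ≤ n) :
    d (γ₁ n) (γ₂ n) ≤ D₁ / 2 * φ₁ n + D₂ / 2 * φ₂ n + n * dista d γ₁ γ₂ := by
  obtain ⟨-, d_comm, d_triangle⟩ := h.1
  have hn' : (0 : ℝ) < n := Nat.cast_pos.2 hn
  suffices (d (γ₁ n) (γ₂ n) - (D₁ / 2 * φ₁ n + D₂ / 2 * φ₂ n)) / n ≤ dista d γ₁ γ₂ by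
    rw [div_le_iff₀' hn'] at this
    linarith
  have hmultiple (m : ℕ) (hm : 1 ≤ m) :
      (d (γ₁ n) (γ₂ n) - (D₁ / 2 * φ₁ n + D₂ / 2 * φ₂ n)) / n ≤
        d (γ₁ (m * n)) (γ₂ (m * n)) / (m * n : ℕ) := by
    have hm' : (0 : ℝ) < m := Nat.cast_pos.2 hm
    rw [Nat.cast_mul, ← div_div]
    gcongr
    rw [le_div_iff₀' hm', mul_sub, mul_add, ← hhom]
    linarith [d_triangle (m • γ₁ n) (γ₁ (m * n)) (m • γ₂ n), d_comm (m • γ₁ n) (γ₁ (m * n)),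
      d_triangle (γ₁ (m * n)) (γ₂ (m * n)) (m • γ₂ n),
      hγ₁.dist_nsmul_le h hφ₁ m hn, hγ₂.dist_nsmul_le h hφ₂ m hn]
  refine le_limsup_of_frequently_le (frequently_atTop.2 fun N => ?_)
    (hγ₁.isBoundedUnder_dist_div h hφ₁ hφ₂ hγ₂)
  exact ⟨(N + 1) * n, N.le_succ.trans (Nat.le_mul_of_pos_right _ hn),
    hmultiple (N + 1) (Nat.le_add_left 1 N)⟩

theorem diagonal (h : IsMetricAbelianMonoid d) {ψ : ℝ → ℝ} (hψ : MonotoneOn ψ (Set.Ici 1))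
    {g : ℕ → ℕ → Γ} (hg : ∀ i, QuasiLinear d φ (g i))
    (hclose : ∀ m n, 1 ≤ m → m ≤ n → d (g n m) (g m m) ≤ ψ m) :
    QuasiLinear d (fun t => φ t + 2 * ψ t) fun n => g n n := by
  refine ⟨(hg 0).1, fun m n hm hn => ?_⟩
  have hmem {k : ℕ} (hk : 1 ≤ k) : (k : ℝ) ∈ Set.Ici 1 := Set.mem_Ici.2 (Nat.one_le_cast.2 hk)
  have hsum : 1 ≤ m + n := hm.trans (Nat.le_add_right m n)
  have hψm := hψ (hmem hm) (hmem hsum) (Nat.cast_le.2 (Nat.le_add_right m n))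
  have hψn := hψ (hmem hn) (hmem hsum) (Nat.cast_le.2 (Nat.le_add_left n m))
  calc d (g (m + n) (m + n)) (g m m + g n n)
      ≤ d (g (m + n) (m + n)) (g (m + n) m + g (m + n) n) +
          d (g (m + n) m + g (m + n) n) (g m m + g n n) := h.1.2.2 _ _ _
    _ ≤ φ (m + n : ℕ) + (d (g (m + n) m) (g m m) + d (g (m + n) n) (g n n)) :=
        add_le_add ((hg (m + n)).2 m n hm hn) (h.dist_add_add_le _ _ _ _)
    _ ≤ φ (m + n : ℕ) + 2 * ψ (m + n : ℕ) := by
        linarith [hclose m (m + n) hm (Nat.le_add_right m n),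
          hclose n (m + n) hn (Nat.le_add_left n m)]

end QuasiLinear

section Completeness

variable {Γ : Type*} [AddCommMonoid Γ] {d : Γ → Γ → ℝ} {φ : ℝ → ℝ} {D C : ℝ}

theorem dista_triangle (h : IsMetricAbelianMonoid d) (hφ : Admissible φ) {γ₁ γ₂ γ₃ : ℕ → Γ}
    (h₁ : γ₁ ∈ Qlin d φ) (h₂ : γ₂ ∈ Qlin d φ) (h₃ : γ₃ ∈ Qlin d φ) :
    dista d γ₁ γ₃ ≤ dista d γ₁ γ₂ + dista d γ₂ γ₃ := by
  obtain ⟨D, hφ⟩ := hφ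
  obtain ⟨c₁, hc₁, h₁⟩ := h₁
  obtain ⟨c₂, hc₂, h₂⟩ := h₂
  obtain ⟨c₃, hc₃, h₃⟩ := h₃
  exact dista_triangle_of_isBoundedUnder h.1
    (h₁.isBoundedUnder_dist_div h (hφ.const_mul hc₁) (hφ.const_mul hc₂) h₂)
    (h₂.isBoundedUnder_dist_div h (hφ.const_mul hc₂) (hφ.const_mul hc₃) h₃)

theorem exists_strictMono_dist_le (h : IsMetricAbelianMonoid d)
    (hhom : ∀ (n : ℕ) (x y : Γ), d (n • x) (n • y) = (n : ℝ) * d x y)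
    (hφ : AdmissibleWith φ D) {g : ℕ → ℕ → Γ} (hg : ∀ i, QuasiLinear d φ (g i))
    (hcauchy : ∀ ε > (0 : ℝ), ∃ N : ℕ, ∀ i j : ℕ, N ≤ i → N ≤ j → dista d (g i) (g j) < ε)
    {δ : ℝ} (hδ : 0 < δ) :
    ∃ ι : ℕ → ℕ, StrictMono ι ∧
      ∀ m n, 1 ≤ m → m ≤ n → d (g (ι n) m) (g (ι m) m) ≤ D * φ m + δ := by
  obtain ⟨ι, hι, hsub⟩ := extraction_forall_of_eventually
    (P := fun m k => ∀ i j, k ≤ i → k ≤ j → dista d (g i) (g j) < δ / (m + 1)) fun m => by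
      obtain ⟨N, hN⟩ := hcauchy (δ / (m + 1)) (by positivity)
      filter_upwards [eventually_ge_atTop N] with k hk i j hi hj
      exact hN i j (hk.trans hi) (hk.trans hj)
  refine ⟨ι, hι, fun m n hm hmn => ?_⟩
  have hdista := hsub m (ι n) (ι m) (hι.monotone hmn) le_rfl
  calc d (g (ι n) m) (g (ι m) m)
      ≤ D / 2 * φ m + D / 2 * φ m + m * dista d (g (ι n)) (g (ι m)) :=
        (hg _).dist_le_add_mul_dista h hhom hφ hφ (hg _) hm
    _ ≤ D / 2 * φ m + D / 2 * φ m + (m + 1) * (δ / (m + 1)) := by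
        gcongr
        · exact dista_nonneg h.1 _ _
        · linarith
    _ = D * φ m + δ := by field_simp; ring

theorem exists_mem_Qlin_tendsto_dista (h : IsMetricAbelianMonoid d)
    (hhom : ∀ (n : ℕ) (x y : Γ), d (n • x) (n • y) = (n : ℝ) * d x y)
    (hφ : AdmissibleWith φ D) (hφ_one : 0 < φ 1) (hC : 0 ≤ C) {g : ℕ → ℕ → Γ}
    (hg : ∀ i, QuasiLinear d (fun t => C * φ t) (g i))
    (hcauchy : ∀ ε > (0 : ℝ), ∃ N : ℕ, ∀ i j : ℕ, N ≤ i → N ≤ j → dista d (g i) (g j) < ε) :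
    ∃ η ∈ Qlin d φ, Tendsto (fun i => dista d (g i) η) atTop (nhds 0) := by
  have hD : 0 ≤ D := hφ.2.2.1
  have hCφ := hφ.const_mul hC
  obtain ⟨ι, hι, hclose⟩ := exists_strictMono_dist_le h hhom hCφ hg hcauchy hφ_one
  refine ⟨fun n => g (ι n) n, ⟨C + 2 * (D * C + 1), by positivity, ?_⟩, ?_⟩
  · have hmono : MonotoneOn (fun t => (D * C + 1) * φ t) (Set.Ici 1) :=
      (monotone_mul_left_of_nonneg (by positivity)).comp_monotoneOn hφ.2.1
    have hdiag := QuasiLinear.diagonal h hmono (fun n => hg (ι n)) fun m n hm hmn => by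
      have hm' : (1 : ℝ) ≤ m := Nat.one_le_cast.2 hm
      linarith [hclose m n hm hmn, hφ.2.1 Set.self_mem_Ici hm' hm']
    simpa only [add_mul, mul_assoc] using hdiag
  · have hsublinear : Tendsto (fun n : ℕ => D * (C * φ n) / n) atTop (nhds 0) := by
      simpa only [mul_div_assoc, mul_zero] using hCφ.tendsto_div_natCast.const_mul D
    refine tendsto_order.2 ⟨fun a ha => .of_forall fun i => ha.trans_le (dista_nonneg h.1 _ _),
      fun ε hε => ?_⟩
    obtain ⟨N, hN⟩ := hcauchy (ε / 2) (half_pos hε)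
    filter_upwards [eventually_ge_atTop N] with i hi
    refine (dista_le_of_eventually_le h.1 hsublinear ?_).trans_lt (half_lt_self hε)
    filter_upwards [eventually_ge_atTop 1, eventually_ge_atTop N] with n hn hNn
    have hdista := hN i (ι n) hi (hNn.trans hι.le_apply)
    calc d (g i n) (g (ι n) n)
        ≤ D / 2 * (C * φ n) + D / 2 * (C * φ n) + n * dista d (g i) (g (ι n)) :=
          (hg i).dist_le_add_mul_dista h hhom hCφ hCφ (hg _) hn
      _ ≤ D * (C * φ n) + n * (ε / 2) := by
          rw [← add_mul, add_halves]
          gcongr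

end Completeness

/-- If the pseudometric is homogeneous and the uniformly bounded defect
property holds, then the space of quasi-linear sequences with the asymptotic
distance is complete. -/
theorem qlin_complete {Γ : Type*} [AddCommMonoid Γ]
    (d : Γ → Γ → ℝ) (h : IsMetricAbelianMonoid d)
    (hhom : ∀ (n : ℕ) (x y : Γ), d (n • x) (n • y) = (n : ℝ) * d x y)
    (φ : ℝ → ℝ) (hφ : Admissible φ) (hφpos : ∀ t : ℝ, 1 ≤ t → 0 < φ t)
    (C : ℝ) (hC : 0 < C)
    (hubd : ∀ γ : ℕ → Γ, (∃ C' ≥ (0 : ℝ), QuasiLinear d (fun t => C' * φ t) γ) →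
      ∃ γ' : ℕ → Γ, QuasiLinear d (fun t => C * φ t) γ' ∧ dista d γ γ' = 0)
    (γs : ℕ → ℕ → Γ)
    (hγs : ∀ i, ∃ C' ≥ (0 : ℝ), QuasiLinear d (fun t => C' * φ t) (γs i))
    (hcauchy : ∀ ε > (0 : ℝ), ∃ N : ℕ, ∀ i j : ℕ, N ≤ i → N ≤ j →
      dista d (γs i) (γs j) < ε) :
    ∃ η : ℕ → Γ, (∃ C' ≥ (0 : ℝ), QuasiLinear d (fun t => C' * φ t) η) ∧
      Filter.Tendsto (fun i : ℕ => dista d (γs i) η) Filter.atTop (nhds 0) := by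
  have ⟨D, hφD⟩ := hφ
  choose g hg hγg using fun i => hubd (γs i) (hγs i)
  have hgQ (i : ℕ) : g i ∈ Qlin d φ := ⟨C, hC.le, hg i⟩
  have hg_cauchy : ∀ ε > (0 : ℝ), ∃ N : ℕ, ∀ i j : ℕ, N ≤ i → N ≤ j →
      dista d (g i) (g j) < ε := fun ε hε => by
    obtain ⟨N, hN⟩ := hcauchy ε hε
    refine ⟨N, fun i j hi hj => ?_⟩
    calc dista d (g i) (g j)
        ≤ dista d (g i) (γs i) + (dista d (γs i) (γs j) + dista d (γs j) (g j)) :=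
          (dista_triangle h hφ (hgQ i) (hγs i) (hgQ j)).trans
            (by gcongr; exact dista_triangle h hφ (hγs i) (hγs j) (hgQ j))
      _ = dista d (γs i) (γs j) := by rw [dista_comm h.1, hγg, hγg, zero_add, add_zero]
      _ < ε := hN i j hi hj
  obtain ⟨η, hη, hlim⟩ :=
    exists_mem_Qlin_tendsto_dista h hhom hφD (hφpos 1 le_rfl) hC.le hg hg_cauchy
  refine ⟨η, hη, squeeze_zero (fun i => dista_nonneg h.1 _ _) (fun i => ?_) hlim⟩
  calc dista d (γs i) η ≤ dista d (γs i) (g i) + dista d (g i) η :=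
        dista_triangle h hφ (hγs i) (hgQ i) hη
    _ = dista d (g i) η := by rw [hγg, zero_add]
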